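/- arXiv:1011.1835 — 2 statements merged into one kernel-verified Lean document; each statement's English description precedes it below -/
import Mathlib

section
/- Let X(t), P(t) be differentiable curves of n×r real matrices satisfying for all t the Stiefel constraints XᵀX = I_r, XᵀP + PᵀX = 0 and the Neumann system with the Euclidean metric: Ẋ = P, Ṗ = −AX − XPᵀP + XXᵀAX. Then for every real λ such that λI_n − A is invertible, the 2r×2r block matrices L*(λ) = [[−Xᵀ(λI_n−A)⁻¹P, −Xᵀ(λI_n−A)⁻¹X],[I_r + Pᵀ(λI_n−A)⁻¹P, Pᵀ(λI_n−A)⁻¹X]] and A*(λ) = [[0, I_r],[Λ − λI_r, 0]] with Λ = XᵀAX − PᵀP satisfy the dual Lax equation d/dt L*(λ) = [L*(λ), A*(λ)]. -/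
open Matrix

/-!
With `S = λ - A`, the dual Lax matrix is `L = E + Z S⁻¹ W`, where `E` is constant,
`Z = [-Xᵀ; Pᵀ]` and `W = [P X]`. Along the Neumann flow each frame is transported by the partner
matrix `B` up to a multiple of `S`: `Z' = -B Z + [0; Xᵀ] S` and `W' = W B + S [X 0]`. The factors
`S` cancel the resolvent, so `(Z S⁻¹ W)' = [Z S⁻¹ W, B] + [0; Xᵀ] W + Z [X 0]`, and the Stiefel
constraints say exactly that the last two terms add up to `diag(-1, 1) = [E, B]`.
-/

section MatrixCalculus

variable {𝕜 l m n : Type*} [NontriviallyNormedField 𝕜] {t : 𝕜}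

section AddCommGroup

variable {E : Type*} [NormedAddCommGroup E] [NormedSpace 𝕜 E]

theorem hasDerivAt_matrix_iff [Finite m] [Finite n] {M : 𝕜 → Matrix m n E} {M' : Matrix m n E} :
    HasDerivAt M M' t ↔ ∀ i j, HasDerivAt (fun s => M s i j) (M' i j) t := by
  cases nonempty_fintype m
  cases nonempty_fintype n
  exact hasDerivAt_pi.trans (forall_congr' fun _ => hasDerivAt_pi)

theorem hasDerivAt_matrix_const_add [Finite m] [Finite n]
    {M : 𝕜 → Matrix m n E} {M' : Matrix m n E} (N : Matrix m n E) (hM : HasDerivAt M M' t) :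
    HasDerivAt (fun s => N + M s) M' t :=
  hasDerivAt_matrix_iff.2 fun i j => (hasDerivAt_matrix_iff.1 hM i j).const_add (N i j)

theorem hasDerivAt_matrix_neg [Finite m] [Finite n]
    {M : 𝕜 → Matrix m n E} {M' : Matrix m n E} (hM : HasDerivAt M M' t) :
    HasDerivAt (fun s => -M s) (-M') t :=
  hasDerivAt_matrix_iff.2 fun i j => (hasDerivAt_matrix_iff.1 hM i j).fun_neg

theorem hasDerivAt_matrix_transpose [Finite m] [Finite n]
    {M : 𝕜 → Matrix m n E} {M' : Matrix m n E} (hM : HasDerivAt M M' t) :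
    HasDerivAt (fun s => (M s)ᵀ) M'ᵀ t :=
  hasDerivAt_matrix_iff.2 fun i j => hasDerivAt_matrix_iff.1 hM j i

theorem hasDerivAt_fromRows [Finite l] [Finite m] [Finite n]
    {M : 𝕜 → Matrix l n E} {N : 𝕜 → Matrix m n E} {M' : Matrix l n E} {N' : Matrix m n E}
    (hM : HasDerivAt M M' t) (hN : HasDerivAt N N' t) :
    HasDerivAt (fun s => fromRows (M s) (N s)) (fromRows M' N') t :=
  hasDerivAt_matrix_iff.2 <| Sum.rec (hasDerivAt_matrix_iff.1 hM) (hasDerivAt_matrix_iff.1 hN)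

theorem hasDerivAt_fromCols [Finite l] [Finite m] [Finite n]
    {M : 𝕜 → Matrix n l E} {N : 𝕜 → Matrix n m E} {M' : Matrix n l E} {N' : Matrix n m E}
    (hM : HasDerivAt M M' t) (hN : HasDerivAt N N' t) :
    HasDerivAt (fun s => fromCols (M s) (N s)) (fromCols M' N') t :=
  hasDerivAt_matrix_iff.2 fun i =>
    Sum.rec (hasDerivAt_matrix_iff.1 hM i) (hasDerivAt_matrix_iff.1 hN i)

end AddCommGroup

section Ring

variable {R : Type*} [NormedRing R] [NormedAlgebra 𝕜 R]

theorem hasDerivAt_matrix_mul [Finite l] [Fintype m] [Finite n]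
    {M : 𝕜 → Matrix l m R} {N : 𝕜 → Matrix m n R} {M' : Matrix l m R} {N' : Matrix m n R}
    (hM : HasDerivAt M M' t) (hN : HasDerivAt N N' t) :
    HasDerivAt (fun s => M s * N s) (M' * N t + M t * N') t := by
  rw [hasDerivAt_matrix_iff] at hM hN ⊢
  intro i j
  simp only [Matrix.add_apply, mul_apply, ← Finset.sum_add_distrib]
  exact HasDerivAt.fun_sum fun p _ => (hM i p).fun_mul (hN p j)

theorem hasDerivAt_matrix_mul_const [Finite l] [Fintype m] [Finite n]
    {M : 𝕜 → Matrix l m R} {M' : Matrix l m R} (hM : HasDerivAt M M' t) (N : Matrix m n R) :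
    HasDerivAt (fun s => M s * N) (M' * N) t := by
  have hN : HasDerivAt (fun _ => N) 0 t :=
    hasDerivAt_matrix_iff.2 fun i j => hasDerivAt_const t (N i j)
  simpa only [Matrix.mul_zero, add_zero] using hasDerivAt_matrix_mul hM hN

end Ring

end MatrixCalculus

section Transport

variable {𝕜 R k n : Type*} [NontriviallyNormedField 𝕜] [NormedCommRing R] [NormedAlgebra 𝕜 R]
  [Fintype k] [Fintype n] [DecidableEq n] {t : 𝕜} {S : Matrix n n R} {B : Matrix k k R}
  {Z : 𝕜 → Matrix k n R} {W : 𝕜 → Matrix n k R} {F : Matrix k n R} {G : Matrix n k R}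

theorem hasDerivAt_mul_inv_mul_of_transport (hS : IsUnit S)
    (hZ : HasDerivAt Z (F * S - B * Z t) t) (hW : HasDerivAt W (W t * B + S * G) t) :
    HasDerivAt (fun s => Z s * S⁻¹ * W s) (⁅Z t * S⁻¹ * W t, B⁆ + (F * W t + Z t * G)) t := by
  have hdet : IsUnit S.det := (isUnit_iff_isUnit_det S).1 hS
  have hcancel : (F * S - B * Z t) * S⁻¹ * W t + Z t * S⁻¹ * (W t * B + S * G)
      = ⁅Z t * S⁻¹ * W t, B⁆ + (F * W t + Z t * G) := by
    have hG : Z t * S⁻¹ * (S * G) = Z t * G := by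
      rw [← Matrix.mul_assoc, nonsing_inv_mul_cancel_right S (Z t) hdet]
    rw [Matrix.mul_add, hG, Matrix.sub_mul, mul_nonsing_inv_cancel_right S F hdet,
      Matrix.sub_mul, Ring.lie_def]
    simp only [Matrix.mul_assoc]
    abel
  exact hcancel ▸ hasDerivAt_matrix_mul (hasDerivAt_matrix_mul_const hZ S⁻¹) hW

theorem hasDerivAt_add_mul_inv_mul_of_transport (hS : IsUnit S)
    (hZ : HasDerivAt Z (F * S - B * Z t) t) (hW : HasDerivAt W (W t * B + S * G) t)
    {E : Matrix k k R} (hE : F * W t + Z t * G = ⁅E, B⁆) :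
    HasDerivAt (fun s => E + Z s * S⁻¹ * W s) ⁅E + Z t * S⁻¹ * W t, B⁆ t := by
  have hlie : ⁅E + Z t * S⁻¹ * W t, B⁆ = ⁅Z t * S⁻¹ * W t, B⁆ + (F * W t + Z t * G) := by
    simp only [hE, Ring.lie_def, Matrix.add_mul, Matrix.mul_add]
    abel
  exact hlie ▸ hasDerivAt_matrix_const_add E (hasDerivAt_mul_inv_mul_of_transport hS hZ hW)

end Transport

section BlockIdentities

variable {R n r : Type*} [Ring R] [DecidableEq r]

theorem lie_fromBlocks_zero_zero_one_zero_fromBlocks_zero_one [Fintype r] (C : Matrix r r R) :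
    ⁅(fromBlocks 0 0 1 0 : Matrix (r ⊕ r) (r ⊕ r) R), fromBlocks 0 (1 : Matrix r r R) C 0⁆
      = fromBlocks (-1) 0 0 1 := by
  simp only [Ring.lie_def, fromBlocks_multiply, sub_eq_add_neg, fromBlocks_neg, fromBlocks_add,
    Matrix.mul_zero, Matrix.zero_mul, Matrix.mul_one, add_zero, zero_add, neg_zero]

theorem fromRows_mul_fromCols_add_eq_of_stiefel [Fintype n] {X P : Matrix n r R}
    (hX : Xᵀ * X = 1) (hXP : Xᵀ * P + Pᵀ * X = 0) :
    fromRows 0 Xᵀ * fromCols P X + fromRows (-Xᵀ) Pᵀ * fromCols X 0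
      = fromBlocks (-1) 0 0 1 := by
  simp only [fromRows_mul_fromCols, fromBlocks_add, Matrix.zero_mul, Matrix.mul_zero,
    Matrix.neg_mul, hX, hXP, add_zero, zero_add]

end BlockIdentities

section DualLaxPair

variable {R n r : Type*} [CommRing R] [Fintype n]

/-- The matrix `Λ = XᵀAX - PᵀP`, which in the Neumann system `P' = XΛ - AX` is the Lagrange
multiplier of the constraint `XᵀX = 1`. -/
def neumannMultiplier (A : Matrix n n R) (X P : Matrix n r R) : Matrix r r R :=
  Xᵀ * A * X - Pᵀ * P

theorem transpose_neumannMultiplier {A : Matrix n n R} (hA : A.IsSymm) (X P : Matrix n r R) :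
    (neumannMultiplier A X P)ᵀ = neumannMultiplier A X P := by
  simp only [neumannMultiplier, transpose_sub, transpose_mul, transpose_transpose, hA.eq,
    Matrix.mul_assoc]

theorem neumann_force_eq [Fintype r] (A : Matrix n n R) (X P : Matrix n r R) :
    -(A * X) - X * Pᵀ * P + X * Xᵀ * A * X = X * neumannMultiplier A X P - A * X := by
  simp only [neumannMultiplier, Matrix.mul_sub, Matrix.mul_assoc]
  abel

variable [DecidableEq r]

/-- The matrix `L*(λ)` of the dual Lax pair of the Neumann system. It is meaningful only when
`λ - A` is invertible: otherwise the matrix inverse takes the junk value `0`. -/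
noncomputable def dualLaxMatrix [DecidableEq n] (A : Matrix n n R) (lam : R) (X P : Matrix n r R) :
    Matrix (r ⊕ r) (r ⊕ r) R :=
  fromBlocks (-(Xᵀ * (lam • 1 - A)⁻¹ * P)) (-(Xᵀ * (lam • 1 - A)⁻¹ * X))
    (1 + Pᵀ * (lam • 1 - A)⁻¹ * P) (Pᵀ * (lam • 1 - A)⁻¹ * X)

/-- The matrix `A*(λ)` of the dual Lax pair of the Neumann system, the partner of `L*(λ)` in the
equation `d/dt L*(λ) = [L*(λ), A*(λ)]`. -/
def dualLaxPartner (A : Matrix n n R) (lam : R) (X P : Matrix n r R) :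
    Matrix (r ⊕ r) (r ⊕ r) R :=
  fromBlocks 0 1 (neumannMultiplier A X P - lam • 1) 0

theorem dualLaxMatrix_eq_add_fromRows_mul_inv_mul_fromCols [DecidableEq n] (A : Matrix n n R)
    (lam : R) (X P : Matrix n r R) :
    dualLaxMatrix A lam X P =
      fromBlocks 0 0 1 0 + fromRows (-Xᵀ) Pᵀ * (lam • 1 - A)⁻¹ * fromCols P X := by
  rw [fromRows_mul, fromRows_mul_fromCols, fromBlocks_add]
  simp only [dualLaxMatrix, Matrix.neg_mul, zero_add]

variable [Fintype r] [DecidableEq n]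

theorem fromRows_mul_sub_dualLaxPartner_mul (A : Matrix n n R) (lam : R) (X P : Matrix n r R) :
    fromRows 0 Xᵀ * (lam • 1 - A) - dualLaxPartner A lam X P * fromRows (-Xᵀ) Pᵀ
      = fromRows (-Pᵀ) (neumannMultiplier A X P * Xᵀ - Xᵀ * A) := by
  rw [dualLaxPartner, fromBlocks_mul_fromRows, fromRows_mul]
  ext (i | i) j <;> simp [Matrix.mul_sub, Matrix.sub_mul]

theorem fromCols_mul_dualLaxPartner_add (A : Matrix n n R) (lam : R) (X P : Matrix n r R) :
    fromCols P X * dualLaxPartner A lam X P + (lam • 1 - A) * fromCols X 0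
      = fromCols (X * neumannMultiplier A X P - A * X) P := by
  rw [dualLaxPartner, fromCols_mul_fromBlocks, mul_fromCols]
  ext i (j | j) <;> simp [Matrix.mul_sub, Matrix.sub_mul]

end DualLaxPair

section NeumannFlow

variable {𝕜 R n r : Type*} [NontriviallyNormedField 𝕜] [NormedCommRing R] [NormedAlgebra 𝕜 R]
  [Fintype n] [DecidableEq n] [Fintype r] [DecidableEq r]
  {A : Matrix n n R} {X P : 𝕜 → Matrix n r R} {t : 𝕜}

theorem hasDerivAt_fromRows_of_neumann (hA : A.IsSymm) (hX : HasDerivAt X (P t) t)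
    (hP : HasDerivAt P (X t * neumannMultiplier A (X t) (P t) - A * X t) t) (lam : R) :
    HasDerivAt (fun s => fromRows (-(X s)ᵀ) (P s)ᵀ)
      (fromRows 0 (X t)ᵀ * (lam • 1 - A)
        - dualLaxPartner A lam (X t) (P t) * fromRows (-(X t)ᵀ) (P t)ᵀ) t := by
  have hPT : (X t * neumannMultiplier A (X t) (P t) - A * X t)ᵀ
      = neumannMultiplier A (X t) (P t) * (X t)ᵀ - (X t)ᵀ * A := by
    rw [transpose_sub, transpose_mul, transpose_mul, transpose_neumannMultiplier hA, hA.eq]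
  rw [fromRows_mul_sub_dualLaxPartner_mul, ← hPT]
  exact hasDerivAt_fromRows (hasDerivAt_matrix_neg (hasDerivAt_matrix_transpose hX))
    (hasDerivAt_matrix_transpose hP)

theorem hasDerivAt_fromCols_of_neumann (hX : HasDerivAt X (P t) t)
    (hP : HasDerivAt P (X t * neumannMultiplier A (X t) (P t) - A * X t) t) (lam : R) :
    HasDerivAt (fun s => fromCols (P s) (X s))
      (fromCols (P t) (X t) * dualLaxPartner A lam (X t) (P t)
        + (lam • 1 - A) * fromCols (X t) 0) t := by
  rw [fromCols_mul_dualLaxPartner_add]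
  exact hasDerivAt_fromCols hP hX

theorem neumann_euclidean_dual_lax_general (hA : A.IsSymm)
    (hc1 : (X t)ᵀ * X t = 1) (hc2 : (X t)ᵀ * P t + (P t)ᵀ * X t = 0)
    (hX : HasDerivAt X (P t) t)
    (hP : HasDerivAt P
      (-(A * X t) - X t * (P t)ᵀ * P t + X t * (X t)ᵀ * A * X t) t)
    {lam : R} (hlam : IsUnit (lam • (1 : Matrix n n R) - A)) :
    HasDerivAt (fun s => dualLaxMatrix A lam (X s) (P s))
      ⁅dualLaxMatrix A lam (X t) (P t), dualLaxPartner A lam (X t) (P t)⁆ t := by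
  rw [neumann_force_eq] at hP
  have hconstraint : fromRows 0 (X t)ᵀ * fromCols (P t) (X t)
        + fromRows (-(X t)ᵀ) (P t)ᵀ * fromCols (X t) 0
      = ⁅fromBlocks 0 0 1 0, dualLaxPartner A lam (X t) (P t)⁆ :=
    (fromRows_mul_fromCols_add_eq_of_stiefel hc1 hc2).trans
      (lie_fromBlocks_zero_zero_one_zero_fromBlocks_zero_one _).symm
  simp only [dualLaxMatrix_eq_add_fromRows_mul_inv_mul_fromCols]
  exact hasDerivAt_add_mul_inv_mul_of_transport hlam
    (hasDerivAt_fromRows_of_neumann hA hX hP lam) (hasDerivAt_fromCols_of_neumann hX hP lam)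
    hconstraint

end NeumannFlow

/-- The Neumann system with the Euclidean metric on the Stiefel variety
implies the dual 2r×2r Lax equation d/dt L*(λ) = [L*(λ), A*(λ)]. -/
theorem neumann_euclidean_dual_lax {n r : ℕ} (a : Fin n → ℝ)
    (A : Matrix (Fin n) (Fin n) ℝ) (hA : A = Matrix.diagonal a)
    (X P : ℝ → Matrix (Fin n) (Fin r) ℝ)
    (hc1 : ∀ t, (X t)ᵀ * X t = 1)
    (hc2 : ∀ t, (X t)ᵀ * P t + (P t)ᵀ * X t = 0)
    (hX : ∀ t i j, HasDerivAt (fun s => X s i j) (P t i j) t)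
    (hP : ∀ t i j, HasDerivAt (fun s => P s i j)
      ((-(A * X t) - X t * (P t)ᵀ * P t + X t * (X t)ᵀ * A * X t) i j) t)
    (lam : ℝ)
    (h1 : IsUnit (lam • (1 : Matrix (Fin n) (Fin n) ℝ) - A))
    (Lstar Astar : ℝ → Matrix (Fin r ⊕ Fin r) (Fin r ⊕ Fin r) ℝ)
    (hL : ∀ t, Lstar t = Matrix.fromBlocks
      (-((X t)ᵀ * (lam • 1 - A)⁻¹ * P t)) (-((X t)ᵀ * (lam • 1 - A)⁻¹ * X t))
      (1 + (P t)ᵀ * (lam • 1 - A)⁻¹ * P t) ((P t)ᵀ * (lam • 1 - A)⁻¹ * X t))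
    (hAst : ∀ t, Astar t = Matrix.fromBlocks
      0 1 (((X t)ᵀ * A * X t - (P t)ᵀ * P t) - lam • 1) 0) :
    ∀ t i j, HasDerivAt (fun s => Lstar s i j)
      ((Lstar t * Astar t - Astar t * Lstar t) i j) t := by
  intro t
  obtain rfl : Lstar = fun s => dualLaxMatrix A lam (X s) (P s) := funext hL
  rw [hAst]
  exact hasDerivAt_matrix_iff.1 <| neumann_euclidean_dual_lax_general
    (hA ▸ isSymm_diagonal a) (hc1 t) (hc2 t)
    (hasDerivAt_matrix_iff.2 (hX t)) (hasDerivAt_matrix_iff.2 (hP t)) h1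
end

section
/- Let X(t), P(t) be differentiable curves of n×r real matrices satisfying for all t the Stiefel constraints XᵀX = I_r, XᵀP + PᵀX = 0 and the Neumann equations with parameter κ: Ẋ = P − (1+2κ)XPᵀX, Ṗ = −AX − XPᵀP + (1+2κ)PXᵀP + XXᵀAX. Then the SO(r)-momentum matrix Ψ = XᵀP − PᵀX is a conserved quantity: d/dt (XᵀP − PᵀX) = 0 for all t. -/
open Matrix

/-!
The momentum `Ψ = XᵀP − PᵀX` is `S − Sᵀ` with `S = XᵀP`, so it suffices that `S` is stationary.
In `S' = (X')ᵀP + XᵀP'` the constraint `XᵀX = 1` makes the potential term `−AX` cancel against the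
constraint force `XXᵀAX`, and what remains of `XᵀP'` is `−(PᵀP − (1 + 2κ)S²) = −(X')ᵀP`.
-/

section MatrixCalculus

variable {𝕜 𝔸 l m n : Type*} [NontriviallyNormedField 𝕜] [NormedRing 𝔸] [NormedAlgebra 𝕜 𝔸]
  [Fintype m]

theorem hasDerivAt_matrix_mul_apply {M : 𝕜 → Matrix l m 𝔸} {N : 𝕜 → Matrix m n 𝔸}
    {M' : Matrix l m 𝔸} {N' : Matrix m n 𝔸} {t : 𝕜} {i : l} {j : n}
    (hM : ∀ k, HasDerivAt (fun s => M s i k) (M' i k) t)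
    (hN : ∀ k, HasDerivAt (fun s => N s k j) (N' k j) t) :
    HasDerivAt (fun s => (M s * N s) i j) ((M' * N t + M t * N') i j) t := by
  simp only [Matrix.add_apply, mul_apply, ← Finset.sum_add_distrib]
  exact HasDerivAt.fun_sum fun k _ => (hM k).mul (hN k)

end MatrixCalculus

section NeumannSystem

variable {R n r : Type*} [CommRing R] [Fintype n]

/-- The momentum `Ψ = XᵀP − PᵀX` of the right `SO(r)`-action on pairs `(X, P)`, with entries in an
arbitrary commutative ring. -/
def stiefelMomentum (X P : Matrix n r R) : Matrix r r R :=
  Xᵀ * P - Pᵀ * X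

theorem stiefelMomentum_eq_sub_transpose (X P : Matrix n r R) :
    stiefelMomentum X P = Xᵀ * P - (Xᵀ * P)ᵀ := by
  rw [stiefelMomentum, transpose_mul, transpose_transpose]

variable [Fintype r]

/-- The `X`-component of the Neumann vector field with parameter `κ`. It is defined for all pairs
`(X, P)`, without the Stiefel constraints. -/
def neumannVelocity (κ : R) (X P : Matrix n r R) : Matrix n r R :=
  P - (1 + 2 * κ) • (X * Pᵀ * X)

/-- The `P`-component of the Neumann vector field with parameter `κ`, for an arbitrary square
matrix `A`. It is defined for all pairs `(X, P)`, without the Stiefel constraints. -/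
def neumannForce (A : Matrix n n R) (κ : R) (X P : Matrix n r R) : Matrix n r R :=
  -(A * X) - X * Pᵀ * P + (1 + 2 * κ) • (P * Xᵀ * P) + X * Xᵀ * A * X

theorem transpose_neumannVelocity_mul (κ : R) (X P : Matrix n r R) :
    (neumannVelocity κ X P)ᵀ * P = Pᵀ * P - (1 + 2 * κ) • (Xᵀ * P * (Xᵀ * P)) := by
  simp only [neumannVelocity, transpose_sub, transpose_smul, transpose_mul, transpose_transpose,
    Matrix.sub_mul, smul_mul, Matrix.mul_assoc]

variable [DecidableEq r]

theorem transpose_mul_neumannForce (A : Matrix n n R) (κ : R) {X : Matrix n r R}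
    (hX : Xᵀ * X = 1) (P : Matrix n r R) :
    Xᵀ * neumannForce A κ X P = -(Pᵀ * P) + (1 + 2 * κ) • (Xᵀ * P * (Xᵀ * P)) := by
  have transpose_mul_cancel (M : Matrix r r R) : Xᵀ * (X * M) = M := by
    rw [← Matrix.mul_assoc, hX, Matrix.one_mul]
  simp only [neumannForce, Matrix.mul_add, Matrix.mul_sub, Matrix.mul_neg, Matrix.mul_smul,
    Matrix.mul_assoc, transpose_mul_cancel]
  abel

theorem transpose_neumannVelocity_mul_add_transpose_mul_neumannForce (A : Matrix n n R) (κ : R)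
    {X : Matrix n r R} (hX : Xᵀ * X = 1) (P : Matrix n r R) :
    (neumannVelocity κ X P)ᵀ * P + Xᵀ * neumannForce A κ X P = 0 := by
  rw [transpose_neumannVelocity_mul, transpose_mul_neumannForce A κ hX]
  abel

end NeumannSystem

section Conservation

variable {𝕜 𝔸 n r : Type*} [NontriviallyNormedField 𝕜] [NormedCommRing 𝔸] [NormedAlgebra 𝕜 𝔸]
  [Fintype n] [Fintype r] [DecidableEq r] {A : Matrix n n 𝔸} {κ : 𝔸} {X P : 𝕜 → Matrix n r 𝔸}
  {t : 𝕜}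

theorem neumann_hasDerivAt_transpose_mul_apply (hc : (X t)ᵀ * X t = 1)
    (hX : ∀ i j, HasDerivAt (fun s => X s i j) (neumannVelocity κ (X t) (P t) i j) t)
    (hP : ∀ i j, HasDerivAt (fun s => P s i j) (neumannForce A κ (X t) (P t) i j) t) (i j : r) :
    HasDerivAt (fun s => ((X s)ᵀ * P s) i j) 0 t := by
  have product_rule : HasDerivAt (fun s => ((X s)ᵀ * P s) i j)
      (((neumannVelocity κ (X t) (P t))ᵀ * P t + (X t)ᵀ * neumannForce A κ (X t) (P t)) i j) t :=
    hasDerivAt_matrix_mul_apply (fun k => hX k i) (fun k => hP k j)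
  rwa [transpose_neumannVelocity_mul_add_transpose_mul_neumannForce A κ hc] at product_rule

theorem neumann_momentum_conserved_general (hc : (X t)ᵀ * X t = 1)
    (hX : ∀ i j, HasDerivAt (fun s => X s i j) (neumannVelocity κ (X t) (P t) i j) t)
    (hP : ∀ i j, HasDerivAt (fun s => P s i j) (neumannForce A κ (X t) (P t) i j) t) (i j : r) :
    HasDerivAt (fun s => stiefelMomentum (X s) (P s) i j) 0 t := by
  have stationary := neumann_hasDerivAt_transpose_mul_apply hc hX hP
  simpa only [stiefelMomentum_eq_sub_transpose, Matrix.sub_apply, transpose_apply, sub_zero]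
    using (stationary i j).fun_sub (stationary j i)

end Conservation

/-- Along the Neumann flow with parameter κ on the Stiefel variety, the
SO(r)-momentum Ψ = XᵀP − PᵀX is conserved. -/
theorem neumann_momentum_conserved {n r : ℕ} (a : Fin n → ℝ)
    (A : Matrix (Fin n) (Fin n) ℝ) (hA : A = Matrix.diagonal a)
    (κ : ℝ) (X P : ℝ → Matrix (Fin n) (Fin r) ℝ)
    (hc1 : ∀ t, (X t)ᵀ * X t = 1)
    (hc2 : ∀ t, (X t)ᵀ * P t + (P t)ᵀ * X t = 0)
    (hX : ∀ t i j, HasDerivAt (fun s => X s i j)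
      ((P t - (1 + 2 * κ) • (X t * (P t)ᵀ * X t)) i j) t)
    (hP : ∀ t i j, HasDerivAt (fun s => P s i j)
      ((-(A * X t) - X t * (P t)ᵀ * P t + (1 + 2 * κ) • (P t * (X t)ᵀ * P t)
        + X t * (X t)ᵀ * A * X t) i j) t) :
    ∀ t i j, HasDerivAt (fun s => ((X s)ᵀ * P s - (P s)ᵀ * X s) i j) 0 t :=
  fun t => neumann_momentum_conserved_general (hc1 t) (hX t) (hP t)
end
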